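/- Let F be a free group, H ≤ F a finitely generated subgroup, and g ∈ F. Then g depends on H (i.e., the homomorphism φ_g : H ∗ ⟨x⟩ → F is not injective) if and only if the rank of the subgroup ⟨H, g⟩ generated by H and g is at most the rank of H. -/

import Mathlib

open scoped Monoid.Coprod

variable {F : Type*}

/-- The canonical homomorphism `φ_g : H ∗ ⟨x⟩ → F` from the free product of `H` with an
infinite cyclic group (the free group on one generator `x`), restricting to the inclusion
`H ↪ F` and sending `x` to `g`. -/
noncomputable def phi [Group F] (H : Subgroup F) (g : F) :
    (↥H ∗ FreeGroup Unit) →* F :=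
  Monoid.Coprod.lift H.subtype (FreeGroup.lift fun _ => g)

/-- `g` depends on `H` (is algebraic over `H`) if `φ_g` is not injective. -/
def Depends [Group F] (H : Subgroup F) (g : F) : Prop :=
  ¬ Function.Injective (phi H g)

/-- `dep H`: the set of elements of `F` that depend on `H`. -/
def depSet [Group F] (H : Subgroup F) : Set F := {g | Depends H g}

/-- `Dep H`: the subgroup generated by the elements that depend on `H`. -/
noncomputable def DepSubgroup [Group F] (H : Subgroup F) : Subgroup F :=
  Subgroup.closure (depSet H)

/-- The rank of a subgroup: the minimal cardinality of a generating set. For subgroups of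
free groups this equals the cardinality of a free basis. -/
noncomputable def rk [Group F] (H : Subgroup F) : Cardinal :=
  ⨅ S : {S : Set F // Subgroup.closure S = H}, Cardinal.mk S.1

/-!
A basis of `H` together with `x` is a basis of `H ∗ ⟨x⟩`, which is therefore free of rank
`rank H + 1`, and `φ_g` maps it onto `⟨H, g⟩`, which is free by Nielsen–Schreier. A surjection
between free groups cannot increase the rank, and when the ranks are equal and finite it is
injective, because finitely generated free groups are Hopfian: they are residually finite, since
a reduced word is detected by a permutation action on its suffixes. Hence `φ_g` is injective
exactly when `⟨H, g⟩` has rank at least `rank H + 1`.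
-/

section RealizesSMul

variable {G β : Type*} [Group G] [MulAction G β] {X : Finset β}

/-- A permutation `σ` of the finite set `X` realizes `g` if it agrees with the action of `g` at
every point that `g` does not move out of `X`. -/
def RealizesSMul (σ : Equiv.Perm X) (g : G) : Prop :=
  ∀ x : X, g • (x : β) ∈ X → (σ x : β) = g • (x : β)

theorem exists_realizesSMul (X : Finset β) (g : G) : ∃ σ : Equiv.Perm X, RealizesSMul σ g :=
  Set.MapsTo.exists_equiv_extend_of_card_eq (Fintype.card_coe X)
    (s := {x : X | g • (x : β) ∈ X}) (fun _ hx => hx)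
    ((MulAction.injective g).comp Subtype.val_injective).injOn

theorem RealizesSMul.inv {σ : Equiv.Perm X} {g : G} (hσ : RealizesSMul σ g) :
    RealizesSMul σ⁻¹ g⁻¹ := by
  intro x hx
  have hσx : σ ⟨g⁻¹ • (x : β), hx⟩ = x := Subtype.ext <| by simp [hσ ⟨g⁻¹ • (x : β), hx⟩]
  rw [Equiv.Perm.inv_eq_iff_eq.2 hσx.symm]

theorem coe_apply_mk_of_realizesSMul {α : Type*} [MulAction (FreeGroup α) β]
    {ρ : FreeGroup α →* Equiv.Perm X} (hρ : ∀ a, RealizesSMul (ρ (.of a)) (FreeGroup.of a))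
    (x : X) (L : List (α × Bool)) (hL : ∀ s, s <:+ L → FreeGroup.mk s • (x : β) ∈ X) :
    (ρ (FreeGroup.mk L) x : β) = FreeGroup.mk L • (x : β) := by
  induction L with
  | nil => simp [← FreeGroup.one_eq_mk]
  | cons p t ih =>
    have hp : RealizesSMul (ρ (.mk [p])) (FreeGroup.mk [p]) := by
      rcases p with ⟨a, _ | _⟩
      · have hinv : FreeGroup.mk [(a, false)] = (FreeGroup.of a)⁻¹ := rfl
        rw [hinv, map_inv]
        exact (hρ a).inv
      · exact hρ a
    have ht := ih fun s hs => hL s (hs.trans (List.suffix_cons p t))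
    have hsplit : FreeGroup.mk (p :: t) = .mk [p] * .mk t := by simp
    have hmem : FreeGroup.mk [p] • (ρ (.mk t) x : β) ∈ X := by
      simpa only [ht, smul_smul, ← hsplit] using hL _ List.suffix_rfl
    rw [hsplit, map_mul, Equiv.Perm.mul_apply, hp _ hmem, ht, mul_smul]

end RealizesSMul

section ResidualFiniteness

theorem residuallyFinite_freeGroup (α : Type*) : Group.ResiduallyFinite (FreeGroup α) := by
  classical
  rw [Group.residuallyFinite_iff_exists_finiteIndex]
  intro w hw
  let X : Finset (FreeGroup α) := (w.toWord.tails.map FreeGroup.mk).toFinset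
  have hX (s) (hs : s <:+ w.toWord) : FreeGroup.mk s ∈ X := by
    simpa [X] using ⟨s, hs, rfl⟩
  choose σ hσ using fun a : α => exists_realizesSMul X (FreeGroup.of a)
  let ρ := FreeGroup.lift σ
  let one : X := ⟨1, hX [] List.nil_suffix⟩
  have hρ : (ρ w one : FreeGroup α) = w := by
    have := coe_apply_mk_of_realizesSMul (ρ := ρ) (by simpa [ρ] using hσ) one w.toWord
      (by simpa [one] using hX)
    simpa [one, FreeGroup.mk_toWord] using this
  refine ⟨ρ.ker, inferInstance, fun hmem => hw ?_⟩
  rw [← hρ, MonoidHom.mem_ker.1 hmem, Equiv.Perm.one_apply]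

variable {G K : Type*} [Group G] [Group K]

theorem residuallyFinite_of_injective [Group.ResiduallyFinite K]
    {f : G →* K} (hf : Function.Injective f) : Group.ResiduallyFinite G := by
  rw [Group.residuallyFinite_iff_forall_finiteIndexNormalSubgroup]
  intro g hg
  have hfg : f g = 1 := Group.eq_one_iff_forall_finiteIndexNormalSubroup _ fun N => hg (N.comap f)
  exact (map_eq_one_iff f hf).1 hfg

theorem residuallyFinite_of_isFreeGroup [IsFreeGroup G] : Group.ResiduallyFinite G :=
  have := residuallyFinite_freeGroup (IsFreeGroup.Generators G)
  residuallyFinite_of_injective (f := (IsFreeGroup.toFreeGroup G).toMonoidHom)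
    (IsFreeGroup.toFreeGroup G).injective

end ResidualFiniteness

section Hopfian

/-- A group is Hopfian if each of its surjective endomorphisms is injective. -/
def IsHopfian (G : Type*) [Group G] : Prop :=
  ∀ f : G →* G, Function.Surjective f → Function.Injective f

theorem finite_monoidHom_of_fg (M N : Type*) [Monoid M] [Monoid.FG M] [Monoid N] [Finite N] :
    Finite (M →* N) := by
  obtain ⟨S, hS⟩ := Monoid.FG.fg_top (M := M)
  refine Finite.of_injective (fun (f : M →* N) (s : S) => f s) fun f f' h => ?_
  exact MonoidHom.eq_of_eqOn_denseM hS fun s hs => congrFun h ⟨s, hs⟩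

variable {G K : Type*} [Group G] [Group K]

/-- Malcev's theorem: precomposition with a surjective endomorphism `f` permutes the finitely many
homomorphisms to a given finite quotient, so every finite quotient map factors through `f`. -/
theorem isHopfian_of_residuallyFinite [Group.FG G] [Group.ResiduallyFinite G] : IsHopfian G := by
  intro f hf
  rw [injective_iff_map_eq_one]
  intro g hg
  refine Group.eq_one_iff_forall_finiteIndexNormalSubroup g fun N => ?_
  have := finite_monoidHom_of_fg G (G ⧸ N.toSubgroup)
  have hinj : Function.Injective fun ρ : G →* G ⧸ N.toSubgroup => ρ.comp f :=
    fun _ _ => (MonoidHom.cancel_right hf).1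
  obtain ⟨ρ, hρ⟩ := Finite.surjective_of_injective hinj (QuotientGroup.mk' N.toSubgroup)
  have : QuotientGroup.mk' N.toSubgroup g = 1 := by simp [← hρ, hg]
  exact (QuotientGroup.eq_one_iff g).1 this

theorem IsHopfian.injective_of_surjective (hG : IsHopfian G) (e : G ≃* K) {f : G →* K}
    (hf : Function.Surjective f) : Function.Injective f :=
  .of_comp (f := e.symm) <|
    hG (e.symm.toMonoidHom.comp f) (e.symm.surjective.comp hf)

end Hopfian

section Rank

open Cardinal

universe u v w

variable {ι : Type u} {G : Type v} [Group G]

theorem closure_range_freeGroupBasis (b : FreeGroupBasis ι G) :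
    Subgroup.closure (Set.range b) = ⊤ := by
  have : Set.range b = b.repr.symm.toMonoidHom '' Set.range FreeGroup.of :=
    Set.range_comp b.repr.symm FreeGroup.of
  rw [this, ← MonoidHom.map_closure, FreeGroup.closure_range_of]
  exact Subgroup.map_top_of_surjective _ b.repr.symm.surjective

/-- Abelianizing reduces this to spanning sets of free `ℤ`-modules. -/
theorem lift_mk_basis_le_of_closure_eq_top (b : FreeGroupBasis ι G) {S : Set G}
    (hS : Subgroup.closure S = ⊤) :
    lift.{v} #ι ≤ lift.{u} #S := by
  let f : G →* Multiplicative (ι →₀ ℤ) := b.lift fun i => .ofAdd (Finsupp.single i 1)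
  let T : Set (ι →₀ ℤ) := (fun g => (f g).toAdd) '' S
  have hmem (g : G) : (f g).toAdd ∈ Submodule.span ℤ T := by
    have hle : Subgroup.closure S ≤
        (AddSubgroup.toSubgroup (Submodule.span ℤ T).toAddSubgroup).comap f :=
      (Subgroup.closure_le _).2 fun s hs => Submodule.subset_span ⟨s, hs, rfl⟩
    exact hle (hS ▸ Subgroup.mem_top g)
  have hspan : Submodule.span ℤ T = ⊤ := by
    rw [eq_top_iff, ← Finsupp.basisSingleOne.span_eq, Submodule.span_le]
    rintro _ ⟨i, rfl⟩
    simpa [f, FreeGroupBasis.lift] using hmem (b i)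
  calc lift.{v} #ι
    _ = lift.{v} #(Set.range (Finsupp.basisSingleOne (R := ℤ) (ι := ι))) := by
      rw [mk_range_eq _ Finsupp.basisSingleOne.injective]
    _ ≤ lift.{v} #T := lift_le.2 (Finsupp.basisSingleOne.le_span hspan)
    _ ≤ lift.{u} #S := mk_image_le_lift

variable {A : Type w} [Group A]

theorem rk_closure_le (S : Set A) : rk (Subgroup.closure S) ≤ #S :=
  ciInf_le' _ (⟨S, rfl⟩ : {T : Set A // Subgroup.closure T = Subgroup.closure S})

theorem rk_lt_aleph0 {H : Subgroup A} (hH : H.FG) : rk H < ℵ₀ := by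
  obtain ⟨S, rfl⟩ := hH
  exact (rk_closure_le _).trans_lt S.finite_toSet.lt_aleph0

theorem lift_rk_range_le (b : FreeGroupBasis ι G) (f : G →* A) :
    lift.{u} (rk f.range) ≤ lift.{w} #ι := by
  have hf : f.range = Subgroup.closure (Set.range (f ∘ b)) := by
    rw [Set.range_comp, ← MonoidHom.map_closure, closure_range_freeGroupBasis,
      MonoidHom.range_eq_map]
  rw [hf]
  exact (lift_le.2 (rk_closure_le _)).trans mk_range_le_lift

theorem lift_rk_eq_lift_mk_basis {H : Subgroup A} (b : FreeGroupBasis ι H) :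
    lift.{u} (rk H) = lift.{w} #ι := by
  refine le_antisymm (by simpa using lift_rk_range_le b H.subtype) ?_
  have : Nonempty {S : Set A // Subgroup.closure S = H} := ⟨⟨H, H.closure_eq⟩⟩
  rw [rk, lift_iInf]
  refine le_ciInf fun ⟨S, hS⟩ => ?_
  subst hS
  calc lift.{w} #ι
    _ ≤ lift.{u} #((↑) ⁻¹' S : Set (Subgroup.closure S)) :=
      lift_mk_basis_le_of_closure_eq_top b Subgroup.closure_closure_coe_preimage
    _ ≤ lift.{u} #S := lift_le.2 (mk_preimage_of_injective _ _ Subtype.val_injective)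

theorem rk_eq_mk_generators (H : Subgroup A) [IsFreeGroup H] :
    rk H = #(IsFreeGroup.Generators H) := by
  simpa only [lift_id] using lift_rk_eq_lift_mk_basis (IsFreeGroup.basis H)

theorem injective_iff_lift_mk_basis_le_lift_rk_range [Group.FG G] (b : FreeGroupBasis ι G)
    (f : G →* A) [IsFreeGroup f.range] :
    Function.Injective f ↔ lift.{w} #ι ≤ lift.{u} (rk f.range) := by
  refine ⟨fun hf => (lift_rk_eq_lift_mk_basis (b.map (MonoidHom.ofInjective hf))).ge,
    fun hle => ?_⟩
  have hmk : lift.{w} #ι = lift.{u} #(IsFreeGroup.Generators f.range) := by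
    rw [hle.antisymm (lift_rk_range_le b f), rk_eq_mk_generators]
  obtain ⟨e⟩ := lift_mk_eq'.1 hmk
  have := b.isFreeGroup
  have := residuallyFinite_of_isFreeGroup (G := G)
  rw [← MonoidHom.rangeRestrict_injective_iff]
  exact isHopfian_of_residuallyFinite.injective_of_surjective
    ((b.reindex e).repr.trans (IsFreeGroup.basis f.range).repr.symm) f.rangeRestrict_surjective

end Rank

section FreeProduct

variable {ι κ G K : Type*} [Group G] [Group K]

/-- The basis of a free product of free groups given by the disjoint union of bases of the two
factors. -/
noncomputable def freeGroupBasisCoprod (b : FreeGroupBasis ι G) (b' : FreeGroupBasis κ K) :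
    FreeGroupBasis (ι ⊕ κ) (G ∗ K) :=
  .ofRepr <| MonoidHom.toMulEquiv
    (Monoid.Coprod.lift (b.lift fun i => .of (.inl i)) (b'.lift fun k => .of (.inr k)))
    (FreeGroup.lift (Sum.elim (fun i => .inl (b i)) fun k => .inr (b' k)))
    (Monoid.Coprod.hom_ext
      (b.ext_hom _ _ fun i => by simp [FreeGroupBasis.lift])
      (b'.ext_hom _ _ fun k => by simp [FreeGroupBasis.lift]))
    (FreeGroup.ext_hom _ _ fun s => by cases s <;> simp [FreeGroupBasis.lift])

theorem fg_coprod [Group.FG G] [Group.FG K] : Group.FG (G ∗ K) := by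
  have hl := (Group.fg_iff_subgroup_fg _).1 (Group.fg_range (Monoid.Coprod.inl : G →* G ∗ K))
  have hr := (Group.fg_iff_subgroup_fg _).1 (Group.fg_range (Monoid.Coprod.inr : K →* G ∗ K))
  exact ⟨Monoid.Coprod.range_inl_sup_range_inr (G := G) (H := K) ▸ hl.sup hr⟩

end FreeProduct

theorem range_phi [Group F] (H : Subgroup F) (g : F) :
    (phi H g).range = H ⊔ Subgroup.closure {g} := by
  rw [phi, Monoid.Coprod.range_lift, H.range_subtype, FreeGroup.range_lift_eq_closure,
    Set.range_const]

theorem isFreeGroup_of_le {G : Type*} [Group G] {H K : Subgroup G} [IsFreeGroup K] (hHK : H ≤ K) :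
    IsFreeGroup H :=
  .ofMulEquiv (Subgroup.subgroupOfEquivOfLe hHK)

theorem dependence_iff_rank_le_general [Group F] (H : Subgroup F) (hH : H.FG) (g : F)
    [IsFreeGroup ↥(H ⊔ Subgroup.closure {g})] :
    Depends H g ↔ rk (H ⊔ Subgroup.closure {g}) ≤ rk H := by
  have : IsFreeGroup H := isFreeGroup_of_le (le_sup_left (b := Subgroup.closure {g}))
  have : IsFreeGroup (phi H g).range := by rwa [range_phi]
  have : Group.FG H := (Group.fg_iff_subgroup_fg H).2 hH
  have : Group.FG (H ∗ FreeGroup Unit) := fg_coprod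
  let b := freeGroupBasisCoprod (IsFreeGroup.basis H) (.ofFreeGroup Unit)
  have hb : Cardinal.mk (IsFreeGroup.Generators H ⊕ Unit) = Order.succ (rk H) := by
    rw [Cardinal.succ_eq_of_lt_aleph0 (rk_lt_aleph0 hH), rk_eq_mk_generators, Cardinal.mk_sum,
      Cardinal.lift_uzero, Cardinal.mk_unit, Cardinal.lift_one]
  calc Depends H g
    _ ↔ ¬ Order.succ (rk H) ≤ rk (phi H g).range := by
      rw [Depends, injective_iff_lift_mk_basis_le_lift_rk_range b, Cardinal.lift_id,
        Cardinal.lift_id, hb]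
    _ ↔ rk (H ⊔ Subgroup.closure {g}) ≤ rk H := by
      rw [not_le, Order.lt_succ_iff, range_phi]

/-- for finitely generated `H`, `g` depends on `H` iff
`rank ⟨H, g⟩ ≤ rank H`. -/
theorem dependence_iff_rank_le [Group F] [IsFreeGroup F] (H : Subgroup F) (hH : H.FG)
    (g : F) :
    Depends H g ↔ rk (H ⊔ Subgroup.closure {g}) ≤ rk H :=
  dependence_iff_rank_le_general H hH g
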